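/- arXiv:2410.20452 — 2 statements merged into one kernel-verified Lean document; each statement's English description precedes it below -/
import Mathlib

section
/- For every ν ∈ (0,1) and every u ∈ ℝ \ {0}, the principal value integral (1/π) p.v.∫_{−∞}^{∞} |u'|^{ν−1}/(u' − u) du' exists (as the limit as ε → 0⁺ of the integral over {u' : |u' − u| > ε}) and equals −cot(πν/2) · |u|^{ν−1} · sgn(u). -/
open Real MeasureTheory Filter Set

/-!
By homogeneity it suffices to treat `u = 1`. There
`|x| ^ (ν - 1) / (x - 1)` is the sum of `-2 x ^ (ν - 1) / (1 - x ^ 2)`, restricted to `x > 0`, and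
of the integrable odd function `sgn(x) |x| ^ (ν - 1) / (1 + |x|)`, which contributes nothing.

For `0 < s < p` the substitution `x ↦ 1 / x` turns the principal value of
`x ^ (s - 1) / (1 - x ^ p)` over `(0, ∞)` into the convergent integral of
`(x ^ (s - 1) - x ^ (p - s - 1)) / (1 - x ^ p)` over `(0, 1)`. Expanding `1 / (1 - x ^ p)` as a
geometric series and integrating term by term yields the Mittag-Leffler series of
`(π / p) cot (π s / p)`. The case `s = ν`, `p = 2` is the one needed.
-/

open scoped Topology

section CotangentSeries

lemma hasSum_one_div_add_sub_one_div_add_one_add {z : ℂ} (hz : ∀ n : ℕ, (n : ℂ) + z ≠ 0) :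
    HasSum (fun n : ℕ => 1 / (n + z) - 1 / (n + 1 + z)) (1 / z) := by
  have term_eq (n : ℕ) : ((n + 1 + z) * (n + z))⁻¹ = 1 / (n + z) - 1 / (n + 1 + z) := by
    have := hz (n + 1)
    push_cast at this
    field_simp [hz n]
    ring
  have summable : Summable fun n : ℕ => 1 / (n + z) - 1 / (n + 1 + z) := by
    refine ((EisensteinSeries.summable_linear_right_add_one_mul_linear_right z 1 1).comp_injective
      Nat.cast_injective).congr fun n => ?_
    rw [← term_eq, Function.comp_apply, Int.cast_natCast, Int.cast_one, one_mul]
    ring_nf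
  rw [summable.hasSum_iff_tendsto_nat]
  have partial_sum (N : ℕ) :
      ∑ n ∈ Finset.range N, (1 / (n + z) - 1 / (n + 1 + z)) = 1 / z - 1 / (N + z) := by
    simpa using Finset.sum_range_sub' (fun n : ℕ => 1 / (n + z)) N
  have tail : Tendsto (fun N : ℕ => 1 / (N + z)) atTop (𝓝 0) := by
    simp only [one_div]
    exact tendsto_inv₀_cobounded.comp
      ((tendsto_add_const_cobounded z).comp tendsto_natCast_atTop_cobounded)
  simpa only [partial_sum, sub_zero] using tail.const_sub (1 / z)

lemma hasSum_pi_mul_cot_pi_mul {z : ℂ} (hz : z ∈ Complex.integerComplement) :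
    HasSum (fun n : ℕ => 1 / (n + z) - 1 / (n + 1 - z)) (π * Complex.cot (π * z)) := by
  have mittagLeffler : HasSum (cotTerm z) (π * Complex.cot (π * z) - 1 / z) :=
    cot_series_rep' hz ▸ (summable_cotTerm hz).hasSum
  have ne_zero (n : ℕ) : (n : ℂ) + z ≠ 0 := by
    simpa only [add_comm, Int.cast_natCast] using Complex.integerComplement_add_ne_zero hz n
  convert mittagLeffler.add (hasSum_one_div_add_sub_one_div_add_one_add ne_zero) using 1
  · funext n
    rw [cotTerm, ← neg_sub (n + 1 : ℂ) z, one_div_neg_eq_neg_one_div, add_comm z]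
    ring
  · ring

lemma hasSum_pi_mul_cot_pi_mul_of_mem_Ioo {x : ℝ} (hx : x ∈ Ioo 0 1) :
    HasSum (fun n : ℕ => 1 / (n + x) - 1 / (n + 1 - x)) (π * cot (π * x)) := by
  have not_int : (x : ℂ) ∈ Complex.integerComplement := by
    rintro ⟨m, hm⟩
    obtain rfl : (m : ℝ) = x := by exact_mod_cast hm
    have : 0 < m ∧ m < 1 := by exact_mod_cast mem_Ioo.1 hx
    lia
  rw [← Complex.hasSum_ofReal]
  exact_mod_cast hasSum_pi_mul_cot_pi_mul not_int

end CotangentSeries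

section BetaTypeIntegral

variable {a b p q x : ℝ}

-- Bernoulli's inequality for the base `x ^ p` and the exponent `q / p`.
lemma one_sub_rpow_le_mul_one_sub_rpow (hp : 0 < p) (hx : x ∈ Ioo 0 1) :
    1 - x ^ q ≤ max 1 (q / p) * (1 - x ^ p) := by
  have base_pos : 0 < x ^ p := rpow_pos_of_pos hx.1 p
  rcases le_total (q / p) 1 with hqp | hqp
  · rw [max_eq_left hqp, one_mul]
    gcongr 1 - ?_
    exact rpow_le_rpow_of_exponent_ge hx.1 hx.2.le ((div_le_one hp).1 hqp)
  · have bernoulli := one_add_mul_self_le_rpow_one_add (s := x ^ p - 1) (by linarith) hqp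
    rw [add_sub_cancel, ← rpow_mul hx.1.le, mul_div_cancel₀ _ hp.ne'] at bernoulli
    rw [max_eq_right hqp]
    linarith

lemma integrableOn_Ioo_zero_one_rpow_sub_one (ha : 0 < a) :
    IntegrableOn (fun x : ℝ => x ^ (a - 1)) (Ioo 0 1) :=
  (intervalIntegral.integrableOn_Ioo_rpow_iff one_pos).2 (by linarith)

lemma integral_Ioo_zero_one_rpow_sub_one (ha : 0 < a) :
    ∫ x in Ioo (0 : ℝ) 1, x ^ (a - 1) = 1 / a := by
  rw [← integral_Ioc_eq_integral_Ioo, ← intervalIntegral.integral_of_le zero_le_one,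
    integral_rpow (Or.inl (by linarith)), sub_add_cancel, one_rpow, zero_rpow ha.ne', sub_zero]

lemma integrableOn_rpow_sub_rpow_div_one_sub_rpow (ha : 0 < a) (hb : 0 < b) (hp : 0 < p) :
    IntegrableOn (fun x : ℝ => (x ^ (a - 1) - x ^ (b - 1)) / (1 - x ^ p)) (Ioo 0 1) := by
  wlog hab : a ≤ b generalizing a b
  · refine (this hb ha (le_of_not_ge hab)).neg.congr_fun (fun x _ => ?_) measurableSet_Ioo
    rw [Pi.neg_apply, ← neg_div, neg_sub]
  refine ((integrableOn_Ioo_zero_one_rpow_sub_one ha).const_mul (max 1 ((b - a) / p))).mono'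
    (Measurable.aestronglyMeasurable (by fun_prop))
    (ae_restrict_of_forall_mem measurableSet_Ioo fun x hx => ?_)
  have denom_pos : 0 < 1 - x ^ p := sub_pos.2 (rpow_lt_one hx.1.le hx.2 hp)
  have factor : x ^ (a - 1) - x ^ (b - 1) = x ^ (a - 1) * (1 - x ^ (b - a)) := by
    rw [mul_sub, mul_one, ← rpow_add hx.1]
    ring_nf
  have num_nonneg : 0 ≤ 1 - x ^ (b - a) :=
    sub_nonneg.2 (rpow_le_one hx.1.le hx.2.le (sub_nonneg.2 hab))
  have power_nonneg : 0 ≤ x ^ (a - 1) := rpow_nonneg hx.1.le _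
  rw [factor, norm_of_nonneg (by positivity), div_le_iff₀ denom_pos]
  calc x ^ (a - 1) * (1 - x ^ (b - a))
      ≤ x ^ (a - 1) * (max 1 ((b - a) / p) * (1 - x ^ p)) := by
        gcongr
        exact one_sub_rpow_le_mul_one_sub_rpow hp hx
    _ = max 1 ((b - a) / p) * x ^ (a - 1) * (1 - x ^ p) := by ring

lemma hasSum_integral_rpow_sub_rpow_div_one_sub_rpow (ha : 0 < a) (hb : 0 < b) (hp : 0 < p) :
    HasSum (fun n : ℕ => 1 / (p * n + a) - 1 / (p * n + b))
      (∫ x in Ioo (0 : ℝ) 1, (x ^ (a - 1) - x ^ (b - 1)) / (1 - x ^ p)) := by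
  have term_integral (n : ℕ) :
      ∫ x in Ioo (0 : ℝ) 1, (x ^ (p * n + a - 1) - x ^ (p * n + b - 1))
        = 1 / (p * n + a) - 1 / (p * n + b) := by
    have han : 0 < p * n + a := by positivity
    have hbn : 0 < p * n + b := by positivity
    rw [integral_sub (integrableOn_Ioo_zero_one_rpow_sub_one han)
      (integrableOn_Ioo_zero_one_rpow_sub_one hbn), integral_Ioo_zero_one_rpow_sub_one han,
      integral_Ioo_zero_one_rpow_sub_one hbn]
  have geometric (x : ℝ) (hx : x ∈ Ioo 0 1) (c : ℝ) :
      HasSum (fun n : ℕ => (x ^ p) ^ n * c) (c / (1 - x ^ p)) := by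
    rw [div_eq_inv_mul]
    exact (hasSum_geometric_of_lt_one (rpow_nonneg hx.1.le p)
      (rpow_lt_one hx.1.le hx.2 hp)).mul_right c
  have term_eq (x : ℝ) (hx : x ∈ Ioo 0 1) (n : ℕ) :
      x ^ (p * n + a - 1) - x ^ (p * n + b - 1)
        = (x ^ p) ^ n * (x ^ (a - 1) - x ^ (b - 1)) := by
    rw [add_sub_assoc, add_sub_assoc, rpow_add hx.1, rpow_add hx.1, rpow_mul_natCast hx.1.le]
    ring
  have norm_term_eq (x : ℝ) (hx : x ∈ Ioo 0 1) (n : ℕ) :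
      ‖x ^ (p * n + a - 1) - x ^ (p * n + b - 1)‖
        = (x ^ p) ^ n * ‖x ^ (a - 1) - x ^ (b - 1)‖ := by
    rw [term_eq x hx, norm_mul, norm_of_nonneg (pow_nonneg (rpow_nonneg hx.1.le p) n)]
  have norm_hasSum (x : ℝ) (hx : x ∈ Ioo 0 1) :
      HasSum (fun n : ℕ => ‖x ^ (p * n + a - 1) - x ^ (p * n + b - 1)‖)
        ‖(x ^ (a - 1) - x ^ (b - 1)) / (1 - x ^ p)‖ := by
    rw [norm_div, norm_of_nonneg (sub_nonneg.2 (rpow_le_one hx.1.le hx.2.le hp.le))]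
    exact (geometric x hx _).congr_fun (norm_term_eq x hx)
  simp only [← term_integral]
  refine hasSum_integral_of_dominated_convergence _ (fun n => by fun_prop)
    (fun n => ae_of_all _ fun x => le_rfl) ?_ ?_ ?_
  · exact ae_restrict_of_forall_mem measurableSet_Ioo fun x hx => (norm_hasSum x hx).summable
  · exact IntegrableOn.congr_fun (integrableOn_rpow_sub_rpow_div_one_sub_rpow ha hb hp).norm
      (fun x hx => (norm_hasSum x hx).tsum_eq.symm) measurableSet_Ioo
  · refine ae_restrict_of_forall_mem measurableSet_Ioo fun x hx => ?_
    simpa only [term_eq x hx] using geometric x hx _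

lemma integral_rpow_sub_rpow_div_one_sub_rpow_eq_cot {s : ℝ} (hs : 0 < s) (hsp : s < p) :
    ∫ x in Ioo (0 : ℝ) 1, (x ^ (s - 1) - x ^ (p - s - 1)) / (1 - x ^ p)
      = π / p * cot (π * s / p) := by
  have hp : 0 < p := hs.trans hsp
  have series := (hasSum_pi_mul_cot_pi_mul_of_mem_Ioo
    (x := s / p) ⟨by positivity, (div_lt_one hp).2 hsp⟩).mul_left (1 / p)
  rw [← mul_assoc, one_div_mul_eq_div, ← mul_div_assoc] at series
  refine (hasSum_integral_rpow_sub_rpow_div_one_sub_rpow hs (sub_pos.2 hsp) hp).unique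
    (series.congr_fun fun n => ?_)
  rw [mul_sub, one_div_mul_one_div, one_div_mul_one_div, mul_add, mul_sub, mul_add, mul_one,
    mul_div_cancel₀ _ hp.ne', add_sub_assoc]

end BetaTypeIntegral

section PrincipalValue

variable {E : Type*} [NormedAddCommGroup E] [NormedSpace ℝ E] {f g : ℝ → E} {a : ℝ} {I J : E}

/-- `HasPrincipalValue f a I` says that `f` is integrable away from `a` and that its Cauchy
principal value at `a`, over the whole line, is `I`. The integrability is part of the notion because
the Bochner integral of a non-integrable function is `0`. -/
structure HasPrincipalValue (f : ℝ → E) (a : ℝ) (I : E) : Prop where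
  integrableOn : ∀ ε > 0, IntegrableOn f {x | ε < |x - a|}
  tendsto : Tendsto (fun ε => ∫ x in {x | ε < |x - a|}, f x) (𝓝[>] 0) (𝓝 I)

lemma measurableSet_lt_abs_sub (a ε : ℝ) : MeasurableSet {x : ℝ | ε < |x - a|} :=
  measurableSet_lt measurable_const (by fun_prop)

lemma hasPrincipalValue_of_integrable (hf : Integrable f) (a : ℝ) :
    HasPrincipalValue f a (∫ x, f x) := by
  have cover : AECover volume (𝓝[>] 0) fun ε : ℝ => {x : ℝ | ε < |x - a|} := by
    refine ⟨(volume.ae_ne a).mono fun x hx => ?_, measurableSet_lt_abs_sub a⟩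
    exact nhdsWithin_le_nhds (eventually_lt_nhds (abs_pos.2 (sub_ne_zero.2 hx)))
  exact ⟨fun _ _ => hf.integrableOn, cover.integral_tendsto_of_countably_generated hf⟩

lemma HasPrincipalValue.add (hf : HasPrincipalValue f a I) (hg : HasPrincipalValue g a J) :
    HasPrincipalValue (f + g) a (I + J) := by
  refine ⟨fun ε hε => (hf.integrableOn ε hε).add (hg.integrableOn ε hε),
    (hf.tendsto.add hg.tendsto).congr' ?_⟩
  filter_upwards [self_mem_nhdsWithin] with ε hε
  exact (integral_add (hf.integrableOn ε hε) (hg.integrableOn ε hε)).symm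

lemma HasPrincipalValue.const_smul (hf : HasPrincipalValue f a I) (c : ℝ) :
    HasPrincipalValue (c • f) a (c • I) := by
  refine ⟨fun ε hε => (hf.integrableOn ε hε).smul c, (hf.tendsto.const_smul c).congr fun ε => ?_⟩
  exact (integral_smul c f).symm

lemma HasPrincipalValue.congr_ae (hf : HasPrincipalValue f a I) (hfg : f =ᵐ[volume] g) :
    HasPrincipalValue g a I :=
  ⟨fun ε hε => (hf.integrableOn ε hε).congr (ae_restrict_of_ae hfg),
    hf.tendsto.congr fun _ => integral_congr_ae (ae_restrict_of_ae hfg)⟩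

lemma HasPrincipalValue.comp_div (hf : HasPrincipalValue f a I) {c : ℝ} (hc : c ≠ 0) :
    HasPrincipalValue (fun x => f (x / c)) (a * c) (|c| • I) := by
  have truncation_eq (ε : ℝ) (x : ℝ) :
      {x | ε < |x - a * c|}.indicator (fun x => f (x / c)) x
        = {x | ε / |c| < |x - a|}.indicator f (x / c) := by
    have : x / c - a = (x - a * c) / c := by field_simp
    simp only [indicator, mem_ofPred_eq, this, abs_div, div_lt_div_iff_of_pos_right (abs_pos.2 hc)]
  constructor
  · intro ε hε
    rw [← integrable_indicator_iff (measurableSet_lt_abs_sub _ _), funext (truncation_eq ε)]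
    refine Integrable.comp_div ?_ hc
    rw [integrable_indicator_iff (measurableSet_lt_abs_sub _ _)]
    exact hf.integrableOn _ (div_pos hε (abs_pos.2 hc))
  · have rescale : Tendsto (fun ε : ℝ => ε / |c|) (𝓝[>] 0) (𝓝[>] 0) := by
      refine tendsto_nhdsWithin_iff.2 ⟨?_, ?_⟩
      · exact ((continuous_id.div_const |c|).tendsto' 0 0 (zero_div _)).mono_left nhdsWithin_le_nhds
      · filter_upwards [self_mem_nhdsWithin] with ε hε using div_pos hε (abs_pos.2 hc)
    refine ((hf.tendsto.comp rescale).const_smul |c|).congr fun ε => ?_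
    rw [← integral_indicator (measurableSet_lt_abs_sub _ _), funext (truncation_eq ε),
      Measure.integral_comp_div, integral_indicator (measurableSet_lt_abs_sub _ _)]
    rfl

lemma integral_eq_zero_of_odd (hf : Function.Odd f) : ∫ x, f x = 0 := by
  have : IsAddTorsionFree E := .of_isTorsionFree ℝ E
  rw [← self_eq_neg, ← integral_neg, ← integral_neg_eq_self]
  exact integral_congr_ae (ae_of_all _ hf)

end PrincipalValue

section Inversion

variable {E : Type*} [NormedAddCommGroup E] [NormedSpace ℝ E] {f g : ℝ → E} {a : ℝ}

lemma image_inv_Ioo_zero_inv (ha : 0 < a) : (fun x : ℝ => x⁻¹) '' Ioo 0 a⁻¹ = Ioi a := by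
  rw [image_inv_eq_inv, inv_Ioo_0_left (inv_pos.2 ha), inv_inv]

lemma hasDerivWithinAt_inv_Ioo_zero {b : ℝ} : ∀ x ∈ Ioo 0 b,
    HasDerivWithinAt (fun x : ℝ => x⁻¹) (-(x ^ 2)⁻¹) (Ioo 0 b) x :=
  fun _ hx => hasDerivWithinAt_inv hx.1.ne' _

lemma integrableOn_Ioi_iff_comp_inv (ha : 0 < a) (f : ℝ → E) :
    IntegrableOn f (Ioi a) ↔ IntegrableOn (fun x => (x ^ 2)⁻¹ • f x⁻¹) (Ioo 0 a⁻¹) := by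
  rw [← image_inv_Ioo_zero_inv ha, integrableOn_image_iff_integrableOn_abs_deriv_smul
    measurableSet_Ioo hasDerivWithinAt_inv_Ioo_zero inv_injective.injOn]
  simp only [abs_neg, abs_inv, abs_sq]

lemma integral_Ioi_eq_integral_comp_inv (ha : 0 < a) (f : ℝ → E) :
    ∫ x in Ioi a, f x = ∫ x in Ioo 0 a⁻¹, (x ^ 2)⁻¹ • f x⁻¹ := by
  rw [← image_inv_Ioo_zero_inv ha, integral_image_eq_integral_abs_deriv_smul
    measurableSet_Ioo hasDerivWithinAt_inv_Ioo_zero inv_injective.injOn]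
  simp only [abs_neg, abs_inv, abs_sq]

-- The interval has length `O(ε ^ 2)` and stays at distance at least `ε / (1 + ε)` from `1`.
lemma tendsto_integral_Ico_one_sub_inv_one_add
    (hf : f =O[𝓝[<] 1] fun x : ℝ => (1 - x)⁻¹) :
    Tendsto (fun ε : ℝ => ∫ x in Ico (1 - ε) (1 + ε)⁻¹, f x) (𝓝[>] 0) (𝓝 0) := by
  obtain ⟨C, C_nonneg, hC⟩ := hf.exists_nonneg
  obtain ⟨b, hb, bound⟩ := (mem_nhdsLT_iff_exists_Ico_subset).1 hC.bound
  have eventually_small : ∀ᶠ ε : ℝ in 𝓝[>] 0, ε ∈ Ioo 0 (1 - b) :=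
    Ioo_mem_nhdsGT (sub_pos.2 hb)
  have linear_limit : Tendsto (fun ε : ℝ => C * ε) (𝓝[>] 0) (𝓝 0) :=
    ((continuous_const_mul C).tendsto' 0 0 (mul_zero C)).mono_left nhdsWithin_le_nhds
  refine squeeze_zero_norm' ?_ linear_limit
  filter_upwards [eventually_small] with ε hε
  obtain ⟨ε_pos, ε_lt⟩ := hε
  have length_eq : (1 + ε)⁻¹ - (1 - ε) = ε ^ 2 / (1 + ε) := by field_simp; ring
  have distance_eq : 1 - (1 + ε)⁻¹ = ε / (1 + ε) := by field_simp; ring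
  have interval_le : 1 - ε ≤ (1 + ε)⁻¹ := by
    rw [← sub_nonneg, length_eq]
    positivity
  have norm_le : ∀ x ∈ Ico (1 - ε) (1 + ε)⁻¹, ‖f x‖ ≤ C * ((1 + ε) / ε) := fun x hx => by
    have gap : ε / (1 + ε) ≤ 1 - x := by linarith [hx.2]
    have x_lt : x < 1 := sub_pos.1 ((by positivity : 0 < ε / (1 + ε)).trans_le gap)
    refine (bound ⟨by linarith [hx.1], x_lt⟩ : ‖f x‖ ≤ _).trans ?_
    rw [norm_inv, norm_of_nonneg (sub_nonneg.2 x_lt.le), ← inv_div ε]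
    gcongr
  calc ‖∫ x in Ico (1 - ε) (1 + ε)⁻¹, f x‖
      ≤ C * ((1 + ε) / ε) * volume.real (Ico (1 - ε) (1 + ε)⁻¹) :=
        norm_setIntegral_le_of_norm_le_const measure_Ico_lt_top norm_le
    _ = C * ε := by
        rw [Real.volume_real_Ico_of_le interval_le, length_eq]
        field_simp

lemma Ioi_zero_inter_lt_abs_sub {ε : ℝ} (hε : 0 ≤ a + ε) :
    Ioi 0 ∩ {x | ε < |x - a|} = Ioo 0 (a - ε) ∪ Ioi (a + ε) := by
  ext x
  simp only [mem_inter_iff, mem_Ioi, mem_ofPred_eq, mem_union, mem_Ioo, lt_abs]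
  grind

lemma integrableOn_Ioi_of_comp_inv_eq (hfg : ∀ x ∈ Ioo 0 1, (x ^ 2)⁻¹ • f x⁻¹ = g x) (ha : 1 < a)
    (hg : IntegrableOn g (Ioo 0 a⁻¹)) : IntegrableOn f (Ioi a) :=
  (integrableOn_Ioi_iff_comp_inv (one_pos.trans ha) f).2 <| hg.congr_fun
    (fun x hx => (hfg x ⟨hx.1, hx.2.trans (inv_lt_one_of_one_lt₀ ha)⟩).symm) measurableSet_Ioo

lemma integral_Ioi_of_comp_inv_eq (hfg : ∀ x ∈ Ioo 0 1, (x ^ 2)⁻¹ • f x⁻¹ = g x) (ha : 1 < a) :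
    ∫ x in Ioi a, f x = ∫ x in Ioo 0 a⁻¹, g x :=
  (integral_Ioi_eq_integral_comp_inv (one_pos.trans ha) f).trans <|
    setIntegral_congr_fun measurableSet_Ioo
      fun x hx => hfg x ⟨hx.1, hx.2.trans (inv_lt_one_of_one_lt₀ ha)⟩

lemma integral_truncation_eq_integral_add_comp_inv {ε : ℝ} (hε : ε ∈ Ioo 0 1)
    (hfg : ∀ x ∈ Ioo 0 1, (x ^ 2)⁻¹ • f x⁻¹ = g x)
    (hf : ∀ b < 1, IntegrableOn f (Ioo 0 b)) (hg : ∀ b < 1, IntegrableOn g (Ioo 0 b)) :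
    ∫ x in {x | ε < |x - 1|}, (Ioi 0).indicator f x
      = (∫ x in Ioo 0 (1 - ε), (f + g) x) + ∫ x in Ico (1 - ε) (1 + ε)⁻¹, g x := by
  obtain ⟨ε_pos, ε_lt⟩ := hε
  have lower_lt : 1 - ε < 1 := by linarith
  have upper_gt : 1 < 1 + ε := by linarith
  have inv_lt : (1 + ε)⁻¹ < 1 := inv_lt_one_of_one_lt₀ upper_gt
  have lower_le_inv : 1 - ε ≤ (1 + ε)⁻¹ := by
    rw [← one_div, le_div_iff₀ (by linarith)]
    nlinarith
  have split_g : Ioo 0 (1 + ε)⁻¹ = Ioo 0 (1 - ε) ∪ Ico (1 - ε) (1 + ε)⁻¹ :=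
    (Ioo_union_Ico_eq_Ioo (by linarith) lower_le_inv).symm
  have hg_inv := hg _ inv_lt
  rw [split_g] at hg_inv
  have disjoint_f : Disjoint (Ioo 0 (1 - ε)) (Ioi (1 + ε)) :=
    disjoint_left.2 fun x hx hx' => (hx.2.trans (lower_lt.trans upper_gt)).not_gt hx'
  have disjoint_g : Disjoint (Ioo 0 (1 - ε)) (Ico (1 - ε) (1 + ε)⁻¹) :=
    disjoint_left.2 fun x hx hx' => hx.2.not_ge hx'.1
  calc ∫ x in {x | ε < |x - 1|}, (Ioi 0).indicator f x
      = (∫ x in Ioo 0 (1 - ε), f x) + ∫ x in Ioi (1 + ε), f x := by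
        rw [setIntegral_indicator measurableSet_Ioi, inter_comm,
          Ioi_zero_inter_lt_abs_sub (by linarith), setIntegral_union disjoint_f measurableSet_Ioi
            (hf _ lower_lt) (integrableOn_Ioi_of_comp_inv_eq hfg upper_gt (hg _ inv_lt))]
    _ = (∫ x in Ioo 0 (1 - ε), f x) +
          ((∫ x in Ioo 0 (1 - ε), g x) + ∫ x in Ico (1 - ε) (1 + ε)⁻¹, g x) := by
        rw [integral_Ioi_of_comp_inv_eq hfg upper_gt, split_g, setIntegral_union disjoint_g
          measurableSet_Ico hg_inv.left_of_union hg_inv.right_of_union]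
    _ = (∫ x in Ioo 0 (1 - ε), (f + g) x) + ∫ x in Ico (1 - ε) (1 + ε)⁻¹, g x := by
        rw [← add_assoc, ← integral_add (hf _ lower_lt) (hg _ lower_lt)]
        rfl

lemma tendsto_integral_Ioo_one_sub (hf : IntegrableOn f (Ioo 0 1)) :
    Tendsto (fun ε : ℝ => ∫ x in Ioo 0 (1 - ε), f x) (𝓝[>] 0) (𝓝 (∫ x in Ioo 0 1, f x)) := by
  have endpoint : Tendsto (fun ε : ℝ => 1 - ε) (𝓝[>] 0) (𝓝 1) :=
    ((continuous_sub_left 1).tendsto' 0 1 (sub_zero 1)).mono_left nhdsWithin_le_nhds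
  have cover : AECover (volume.restrict (Ioo 0 1)) (𝓝[>] 0) fun ε : ℝ => Ioo 0 (1 - ε) :=
    aecover_Ioo_of_Ioo tendsto_const_nhds endpoint
  refine (cover.integral_tendsto_of_countably_generated hf).congr' ?_
  filter_upwards [self_mem_nhdsWithin] with ε hε
  rw [Measure.restrict_restrict_of_subset (Ioo_subset_Ioo_right (sub_le_self 1 (mem_Ioi.1 hε).le))]

-- Inversion folds `(1 + ε, ∞)` onto `(0, (1 + ε)⁻¹)`, up to the piece `[1 - ε, (1 + ε)⁻¹)`, which
-- does not contribute in the limit.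
lemma hasPrincipalValue_indicator_Ioi_of_comp_inv_eq
    (hfg : ∀ x ∈ Ioo 0 1, (x ^ 2)⁻¹ • f x⁻¹ = g x)
    (hf : ∀ b < 1, IntegrableOn f (Ioo 0 b)) (hg : ∀ b < 1, IntegrableOn g (Ioo 0 b))
    (hadd : IntegrableOn (f + g) (Ioo 0 1)) (hO : g =O[𝓝[<] 1] fun x : ℝ => (1 - x)⁻¹) :
    HasPrincipalValue ((Ioi 0).indicator f) 1 (∫ x in Ioo 0 1, (f + g) x) := by
  constructor
  · intro ε hε
    have upper_gt : 1 < 1 + ε := lt_add_of_pos_right 1 hε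
    rw [integrableOn_indicator_iff measurableSet_Ioi, Ioi_zero_inter_lt_abs_sub (by linarith)]
    exact (hf _ (sub_lt_self 1 hε)).union <|
      integrableOn_Ioi_of_comp_inv_eq hfg upper_gt (hg _ (inv_lt_one_of_one_lt₀ upper_gt))
  · rw [← add_zero (∫ x in Ioo 0 1, (f + g) x)]
    refine ((tendsto_integral_Ioo_one_sub hadd).add
      (tendsto_integral_Ico_one_sub_inv_one_add hO)).congr' ?_
    filter_upwards [Ioo_mem_nhdsGT one_pos] with ε hε
    exact (integral_truncation_eq_integral_add_comp_inv hε hfg hf hg).symm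

end Inversion

section RationalPowers

variable {s p : ℝ}

lemma integrableOn_Ioo_zero_rpow_div_one_sub_rpow (hs : 0 < s) (hp : 0 < p) {b : ℝ} (hb : b < 1) :
    IntegrableOn (fun x : ℝ => x ^ (s - 1) / (1 - x ^ p)) (Ioo 0 b) := by
  have denom_ne : ∀ x ∈ Icc 0 b, 1 - x ^ p ≠ 0 := fun x hx =>
    (sub_pos.2 (rpow_lt_one hx.1 (hx.2.trans_lt hb) hp)).ne'
  have continuousOn_inv : ContinuousOn (fun x : ℝ => (1 - x ^ p)⁻¹) (Icc 0 b) :=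
    (continuousOn_const.sub (continuous_rpow_const hp.le).continuousOn).inv₀ denom_ne
  simp only [div_eq_mul_inv]
  exact ((integrableOn_Ioo_zero_one_rpow_sub_one hs).mono_set
    (Ioo_subset_Ioo_right hb.le)).mul_continuousOn_of_subset continuousOn_inv measurableSet_Ioo
      isCompact_Icc Ioo_subset_Icc_self

lemma isBigO_rpow_div_one_sub_rpow (hp : 0 < p) (c : ℝ) :
    (fun x : ℝ => x ^ c / (1 - x ^ p)) =O[𝓝[<] 1] fun x => (1 - x)⁻¹ := by
  have num : (fun x : ℝ => x ^ c) =O[𝓝[<] 1] fun _ => (1 : ℝ) :=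
    ((continuousAt_rpow_const 1 c (Or.inl one_ne_zero)).isBigO_one ℝ).mono nhdsWithin_le_nhds
  have denom : (fun x : ℝ => (1 - x ^ p)⁻¹) =O[𝓝[<] 1] fun x => (1 - x)⁻¹ := by
    refine .of_bound (max 1 (1 / p)) ?_
    filter_upwards [Ioo_mem_nhdsLT one_pos] with x hx
    have comparison := one_sub_rpow_le_mul_one_sub_rpow (q := 1) hp hx
    rw [rpow_one] at comparison
    have dist_pos : 0 < 1 - x := sub_pos.2 hx.2
    have denom_pos : 0 < 1 - x ^ p := sub_pos.2 (rpow_lt_one hx.1.le hx.2 hp)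
    rwa [norm_of_nonneg (inv_nonneg.2 denom_pos.le), norm_of_nonneg (inv_nonneg.2 dist_pos.le),
      ← div_eq_mul_inv, inv_le_comm₀ denom_pos (by positivity), inv_div,
      div_le_iff₀' (by positivity)]
  simpa only [div_eq_mul_inv, one_mul] using num.mul denom

lemma hasPrincipalValue_rpow_div_one_sub_rpow (hs : 0 < s) (hsp : s < p) :
    HasPrincipalValue ((Ioi 0).indicator fun x => x ^ (s - 1) / (1 - x ^ p)) 1
      (π / p * cot (π * s / p)) := by
  have hp : 0 < p := hs.trans hsp
  have hps : 0 < p - s := sub_pos.2 hsp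
  have inversion : ∀ x ∈ Ioo (0 : ℝ) 1, (x ^ 2)⁻¹ • (x⁻¹ ^ (s - 1) / (1 - x⁻¹ ^ p))
      = -(x ^ (p - s - 1) / (1 - x ^ p)) := fun x hx => by
    have pow_lt : x ^ p < 1 := rpow_lt_one hx.1.le hx.2 hp
    have pow_pos : 0 < x ^ p := rpow_pos_of_pos hx.1 p
    have exponent : x ^ (p - s - 1) = x ^ p * (x ^ (s - 1))⁻¹ * (x ^ 2)⁻¹ := by
      rw [← rpow_two, ← rpow_neg hx.1.le, ← rpow_neg hx.1.le, ← rpow_add hx.1, ← rpow_add hx.1]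
      ring_nf
    have : x ^ p - 1 ≠ 0 := (sub_neg.2 pow_lt).ne
    rw [exponent, inv_rpow hx.1.le, inv_rpow hx.1.le, smul_eq_mul, ← neg_sub (x ^ p) 1]
    field_simp
  have sum_eq : (fun x : ℝ => x ^ (s - 1) / (1 - x ^ p)) + -(fun x => x ^ (p - s - 1) / (1 - x ^ p))
      = fun x => (x ^ (s - 1) - x ^ (p - s - 1)) / (1 - x ^ p) := by
    simp only [sub_div]
    exact (sub_eq_add_neg _ _).symm
  have key := hasPrincipalValue_indicator_Ioi_of_comp_inv_eq inversion
    (fun b hb => integrableOn_Ioo_zero_rpow_div_one_sub_rpow hs hp hb)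
    (fun b hb => (integrableOn_Ioo_zero_rpow_div_one_sub_rpow hps hp hb).neg)
    (sum_eq ▸ integrableOn_rpow_sub_rpow_div_one_sub_rpow hs hps hp)
    (isBigO_rpow_div_one_sub_rpow hp _).neg_left
  rwa [sum_eq, integral_rpow_sub_rpow_div_one_sub_rpow_eq_cot hs hsp] at key

lemma integrable_abs_rpow_div_one_add_abs (hs : s ∈ Ioo 0 1) :
    Integrable fun x : ℝ => |x| ^ (s - 1) / (1 + |x|) := by
  suffices IntegrableOn (fun x : ℝ => x ^ (s - 1) / (1 + x)) (Ioi 0) by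
    simpa using (integrable_fun_norm_addHaar (volume : Measure ℝ)
      (f := fun x => x ^ (s - 1) / (1 + x))).2 (by simpa using this)
  have measurable : Measurable fun x : ℝ => x ^ (s - 1) / (1 + x) := by fun_prop
  have near_zero : IntegrableOn (fun x : ℝ => x ^ (s - 1) / (1 + x)) (Ioc 0 1) := by
    refine ((integrableOn_Ioc_iff_integrableOn_Ioo).2
      (integrableOn_Ioo_zero_one_rpow_sub_one hs.1)).mono' measurable.aestronglyMeasurable
      (ae_restrict_of_forall_mem measurableSet_Ioc fun x hx => ?_)
    have := hx.1
    rw [norm_of_nonneg (by positivity)]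
    exact div_le_self (by positivity) (by linarith)
  have near_infinity : IntegrableOn (fun x : ℝ => x ^ (s - 1) / (1 + x)) (Ioi 1) := by
    refine (integrableOn_Ioi_rpow_of_lt (a := s - 2) (by linarith [hs.2]) one_pos).mono'
      measurable.aestronglyMeasurable (ae_restrict_of_forall_mem measurableSet_Ioi fun x hx => ?_)
    have x_pos : 0 < x := one_pos.trans hx
    rw [norm_of_nonneg (by positivity), show s - 2 = s - 1 - 1 by ring,
      rpow_sub_one x_pos.ne' (s - 1)]
    gcongr
    linarith
  rw [← Ioc_union_Ioi_eq_Ioi zero_le_one]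
  exact near_zero.union near_infinity

lemma hasPrincipalValue_abs_rpow_div_one_add_abs_mul_div_abs (hs : s ∈ Ioo 0 1) (a : ℝ) :
    HasPrincipalValue (fun x : ℝ => |x| ^ (s - 1) / (1 + |x|) * (x / |x|)) a 0 := by
  have odd : Function.Odd fun x : ℝ => |x| ^ (s - 1) / (1 + |x|) * (x / |x|) := fun x => by
    simp only [abs_neg, neg_div, mul_neg]
  have integrable : Integrable fun x : ℝ => |x| ^ (s - 1) / (1 + |x|) * (x / |x|) := by
    refine (integrable_abs_rpow_div_one_add_abs hs).mul_bdd (c := 1)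
      (Measurable.aestronglyMeasurable (by fun_prop)) (ae_of_all _ fun x => ?_)
    rw [norm_div, norm_eq_abs, norm_eq_abs, abs_abs]
    exact div_self_le_one _
  exact integral_eq_zero_of_odd odd ▸ hasPrincipalValue_of_integrable integrable a

lemma hasPrincipalValue_abs_rpow_div_sub_one (hs : s ∈ Ioo 0 1) :
    HasPrincipalValue (fun x : ℝ => |x| ^ (s - 1) / (x - 1)) 1 (-(π * cot (π * s / 2))) := by
  have half_line := (hasPrincipalValue_rpow_div_one_sub_rpow hs.1
    (hs.2.trans one_lt_two)).const_smul (-2)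
  have sum := half_line.add (hasPrincipalValue_abs_rpow_div_one_add_abs_mul_div_abs hs 1)
  rw [add_zero, smul_eq_mul, ← mul_assoc, ← mul_div_assoc, neg_mul, neg_div,
    mul_div_cancel_left₀ _ two_ne_zero, neg_mul] at sum
  refine sum.congr_ae ?_
  filter_upwards [volume.ae_ne 1, volume.ae_ne 0] with x x_ne_one x_ne_zero
  simp only [Pi.add_apply, Pi.smul_apply, smul_eq_mul, rpow_two]
  rcases x_ne_zero.lt_or_gt with x_neg | x_pos
  · rw [indicator_of_notMem (notMem_Ioi.2 x_neg.le), abs_of_neg x_neg]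
    have : 1 - x ≠ 0 := by linarith
    rw [mul_zero, zero_add, ← neg_sub 1 x, ← sub_eq_add_neg]
    field_simp
  · rw [indicator_of_mem (mem_Ioi.2 x_pos), abs_of_pos x_pos]
    have : x - 1 ≠ 0 := sub_ne_zero.2 x_ne_one
    have : 1 + x ≠ 0 := by positivity
    rw [show 1 - x ^ 2 = -((x - 1) * (1 + x)) by ring]
    field_simp
    ring

lemma hasPrincipalValue_abs_rpow_div_sub (hs : s ∈ Ioo 0 1) {u : ℝ} (hu : u ≠ 0) :
    HasPrincipalValue (fun x : ℝ => |x| ^ (s - 1) / (x - u)) u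
      (-(π * cot (π * s / 2)) * |u| ^ (s - 1) * sign u) := by
  have scaled := ((hasPrincipalValue_abs_rpow_div_sub_one hs).comp_div hu).const_smul
    (|u| ^ (s - 1) / u)
  have integrand_eq : ((|u| ^ (s - 1) / u) • fun x : ℝ => |x / u| ^ (s - 1) / (x / u - 1))
      = fun x => |x| ^ (s - 1) / (x - u) := by
    funext x
    have : |u| ^ (s - 1) ≠ 0 := (rpow_pos_of_pos (abs_pos.2 hu) _).ne'
    rw [Pi.smul_apply, smul_eq_mul, abs_div, div_rpow (abs_nonneg x) (abs_nonneg u),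
      div_sub_one hu]
    field_simp
  rw [integrand_eq, one_mul] at scaled
  convert scaled using 1
  rcases hu.lt_or_gt with u_neg | u_pos
  · rw [sign_of_neg u_neg, abs_of_neg u_neg, smul_eq_mul, smul_eq_mul]
    field_simp
  · rw [sign_of_pos u_pos, abs_of_pos u_pos, smul_eq_mul, smul_eq_mul]
    field_simp

end RationalPowers

/-- For every `ν ∈ (0,1)` and every `u ≠ 0`, the principal value integral
`(1/π) p.v.∫_{-∞}^{∞} |u'|^(ν-1)/(u' - u) du'` exists (as the limit as `ε → 0⁺` of the
integral over `{u' : |u' - u| > ε}`) and equals `-cot(πν/2) |u|^(ν-1) sgn(u)`. -/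
theorem pv_integral_abs_rpow (ν : ℝ) (hν : ν ∈ Set.Ioo (0:ℝ) 1) (u : ℝ) (hu : u ≠ 0) :
    Filter.Tendsto
      (fun ε : ℝ => (1/π) * ∫ x in {x : ℝ | ε < |x - u|}, |x| ^ (ν - 1) / (x - u))
      (nhdsWithin (0:ℝ) (Set.Ioi 0))
      (nhds (-Real.cot (π * ν / 2) * |u| ^ (ν - 1) * Real.sign u)) := by
  have limit := (hasPrincipalValue_abs_rpow_div_sub hν hu).tendsto.const_mul (1 / π)
  convert limit using 2
  field_simp
end

section
/- Let β ∈ (0,1) and let f be the 2π-periodic extension of u ↦ |u|^β from [−π,π). Then there exist constants C > 0 and δ ∈ (0,π) such that for all u with 0 < |u| < δ, |(K_∞ f)(u) + β tan(πβ/2) · |u|^{β−1}| ≤ C; that is, (K_∞ f)(u) = −β tan(πβ/2) |u|^{β−1} + O(1) as u → 0. -/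
open Real MeasureTheory Filter Set Asymptotics

/-- Principal value (at `u`) of the integral of `g` over `(-π, π)`. -/
noncomputable def pvInt (g : ℝ → ℝ) (u : ℝ) : ℝ :=
  limUnder (nhdsWithin (0:ℝ) (Set.Ioi 0))
    (fun ε : ℝ => ∫ x in {x : ℝ | x ∈ Set.Ioo (-π) π ∧ ε < |x - u|}, g x)

/-- Periodic Hilbert transform of a `2π`-periodic function:
`ℋ(f)(u) = (1/π) Σ_{n ∈ ℤ} p.v.∫_{-π}^{π} f(x)/(x - u + 2πn) dx`. -/
noncomputable def periodicHilbert (f : ℝ → ℝ) (u : ℝ) : ℝ :=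
  (1/π) * ∑' n : ℤ, pvInt (fun x => f x / (x - u + 2*π*(n : ℝ))) u

/-- The operator `K_∞ = -ℋ ∂ᵤ` acting via the a.e. derivative. -/
noncomputable def Kinf (f : ℝ → ℝ) (u : ℝ) : ℝ := - periodicHilbert (deriv f) u

/-- The `2π`-periodic extension of `g : [-π, π) → ℝ`. -/
noncomputable def perExt (g : ℝ → ℝ) (x : ℝ) : ℝ :=
  g (x - 2*π*(⌊(x + π)/(2*π)⌋ : ℝ))

/-!
On `(-π, π)` the derivative of `|x| ^ β` is `β s(x)` with `s(x) = sgn(x) |x| ^ (β - 1)`, which has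
mean zero.

In the `n = 0` term of the Hilbert transform, `s(x) / (x - u)` is the difference quotient of `s` at
`u` plus `s(u) / (x - u)`. The second part has principal value
`s(u) log ((π - u) / (π + u)) = O(|u| ^ β)`. Folding the first along `x ↦ -x` and scaling by `|u|`
turns its integral into `2 |u| ^ (β - 1) ∫_0^{π / |u|} (y ^ β - 1) / (y ^ 2 - 1) dy`. The integral
over all of `(0, ∞)` is `(π / 2) tan (π β / 2)`, because expanding `1 / (1 - y ^ 2)` in powers of
`y ^ 2` on `(0, 1)` and of `y ^ (-2)` on `(1, ∞)` gives the partial fractions of the tangent; the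
missing tail contributes `O(1)`.

For `n ≠ 0`, mean zero allows subtracting `1 / (2 π n)` from the kernel `1 / (x - u + 2 π n)`,
leaving `O(1 / n ^ 2)` uniformly for small `u`, so that these terms together are `O(1)`.
-/

open scoped Topology

/-! ### Series, slopes and logarithms -/

theorem hasSum_sub_succ_of_antitone {a : ℕ → ℝ} (ha : Antitone a)
    (ha0 : Tendsto a atTop (𝓝 0)) : HasSum (fun k ↦ a k - a (k + 1)) (a 0) := by
  rw [hasSum_iff_tendsto_nat_of_nonneg fun k ↦ sub_nonneg.2 (ha k.le_succ)]
  simpa only [Finset.sum_range_sub', sub_zero] using ha0.const_sub (a 0)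

theorem hasSum_cot {z : ℝ} (hz : (z : ℂ) ∈ Complex.integerComplement) :
    HasSum (fun n : ℕ ↦ 1 / (z - (n + 1)) + 1 / (z + (n + 1))) (π * cot (π * z) - 1 / z) := by
  rw [← Complex.hasSum_ofReal]
  convert (summable_cotTerm hz).hasSum using 1
  · ext n
    simp [cotTerm]
  · rw [← cot_series_rep' hz]
    push_cast
    rfl

theorem hasSum_tan {β : ℝ} (hβ : β ∈ Ioo (-1) 1) :
    HasSum (fun k : ℕ ↦ 1 / (2 * k + 1 - β) - 1 / (2 * k + 1 + β))
      (π / 2 * tan (π * β / 2)) := by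
  obtain ⟨hβ₁, hβ₂⟩ := hβ
  have hz : (((1 - β) / 2 : ℝ) : ℂ) ∈ Complex.integerComplement := by
    rw [Complex.mem_integerComplement_iff]
    rintro ⟨n, hn⟩
    have hn : (n : ℝ) = (1 - β) / 2 := mod_cast hn
    have h0 : 0 < n := by exact_mod_cast (by linarith : (0 : ℝ) < n)
    have h1 : n < 1 := by exact_mod_cast (by linarith : (n : ℝ) < 1)
    lia
  have hcot : cot (π * ((1 - β) / 2)) = tan (π * β / 2) := by
    rw [← tan_inv_eq_cot, ← tan_pi_div_two_sub]
    congr 1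
    ring
  have hanti : Antitone fun k : ℕ ↦ 1 / (2 * k + 1 - β) := by
    intro m n hmn
    have : (0 : ℝ) ≤ m := m.cast_nonneg
    exact one_div_le_one_div_of_le (by linarith) (by gcongr)
  have hlim : Tendsto (fun k : ℕ ↦ 1 / (2 * k + 1 - β)) atTop (𝓝 0) := by
    refine ((tendsto_mul_add_inv_atTop_nhds_zero 2 (1 - β) two_ne_zero).comp
      tendsto_natCast_atTop_atTop).congr fun k ↦ ?_
    simp only [Function.comp_apply, one_div, add_sub_assoc]
  convert (hasSum_sub_succ_of_antitone hanti hlim).add ((hasSum_cot hz).mul_left (1 / 2))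
    using 1
  · ext k
    have : (0 : ℝ) ≤ k := k.cast_nonneg
    rw [show (1 - β) / 2 - (k + 1) = -(2 * k + 1 + β) / 2 by ring,
      show (1 - β) / 2 + (k + 1) = (2 * (k + 1) + 1 - β) / 2 by ring]
    have : 2 * k + 1 + β ≠ 0 := by linarith
    push_cast
    field_simp
    ring
  · rw [hcot, one_div_div, Nat.cast_zero]
    ring

theorem hasSum_integral_mul_one_sub_mul_pow {α : Type*} {_ : MeasurableSpace α} {μ : Measure α}
    {h r : α → ℝ} (hh : Integrable h μ) (hr : AEStronglyMeasurable r μ)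
    (hr_mem : ∀ᵐ x ∂μ, r x ∈ Ico 0 1) :
    HasSum (fun k : ℕ ↦ ∫ x, h x * (1 - r x) * r x ^ k ∂μ) (∫ x, h x ∂μ) := by
  have hgeom : ∀ c t : ℝ, t ∈ Ico 0 1 → HasSum (fun k : ℕ ↦ c * (1 - t) * t ^ k) c := by
    intro c t ht
    have h := (hasSum_geometric_of_lt_one ht.1 ht.2).mul_left (c * (1 - t))
    rwa [mul_inv_cancel_right₀ (sub_pos.2 ht.2).ne'] at h
  refine hasSum_integral_of_dominated_convergence (fun k x ↦ |h x| * (1 - r x) * r x ^ k)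
    (fun k ↦ (hh.aestronglyMeasurable.mul (aestronglyMeasurable_const.sub hr)).mul (hr.pow k))
    (fun k ↦ ?_) ?_ (hh.abs.congr ?_) ?_
  all_goals filter_upwards [hr_mem] with x hx
  · rw [norm_mul, norm_mul, norm_pow, norm_of_nonneg hx.1, norm_of_nonneg (sub_nonneg.2 hx.2.le),
      norm_eq_abs]
  · exact (hgeom _ _ hx).summable
  · exact (hgeom _ _ hx).tsum_eq.symm
  · exact hgeom _ _ hx

theorem integral_neg_self_eq_integral_add_comp_neg {f : ℝ → ℝ} {a : ℝ}
    (hf : IntervalIntegrable f volume (-a) a) :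
    ∫ x in -a..a, f x = ∫ x in (0 : ℝ)..a, (f x + f (-x)) := by
  have hmem : 0 ∈ uIcc (-a) a := by
    rw [mem_uIcc]
    grind
  have hl : IntervalIntegrable f volume (-a) 0 := hf.mono_set (uIcc_subset_uIcc_left hmem)
  have hr : IntervalIntegrable f volume 0 a := hf.mono_set (uIcc_subset_uIcc_right hmem)
  have hn : IntervalIntegrable (fun x ↦ f (-x)) volume 0 a := by
    simpa using ((IntervalIntegrable.iff_comp_neg (f := f)).1 hl).symm
  rw [intervalIntegral.integral_add hr hn, intervalIntegral.integral_comp_neg, neg_zero, add_comm,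
    intervalIntegral.integral_add_adjacent_intervals hl hr]

theorem integrableOn_slope {f : ℝ → ℝ} {s : Set ℝ} {u : ℝ} (hf : IntegrableOn f s)
    (hs : volume s ≠ ⊤) (hu : DifferentiableAt ℝ f u) : IntegrableOn (slope f u) s := by
  obtain ⟨C, hC⟩ := (hasDerivAt_iff_tendsto_slope.1 hu.hasDerivAt).norm.isBoundedUnder_le
  obtain ⟨δ, hδ, hball⟩ := Metric.mem_nhdsWithin_iff.1 (eventually_map.1 hC)
  have hconst : IntegrableOn (fun _ ↦ f u) s := integrableOn_const hs
  have hbound : IntegrableOn (fun x ↦ |C| + |f x - f u| / δ) s :=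
    (integrableOn_const hs).add ((hf.sub hconst).abs.div_const δ)
  have hmeas : AEStronglyMeasurable (slope f u) (volume.restrict s) := by
    simp only [slope_fun_def_field]
    exact ((hf.sub hconst).aemeasurable.div (by fun_prop)).aestronglyMeasurable
  refine hbound.mono' hmeas (.of_forall fun x ↦ ?_)
  have hfar : 0 ≤ |f x - f u| / δ := by positivity
  rcases eq_or_ne x u with rfl | hxu
  · simp
  by_cases hx : dist x u < δ
  · have hnear : ‖slope f u x‖ ≤ C := hball ⟨hx, hxu⟩
    linarith [le_abs_self C]
  · rw [slope_def_field, norm_div, norm_eq_abs, norm_eq_abs]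
    have : |f x - f u| / |x - u| ≤ |f x - f u| / δ := by
      gcongr
      simpa [dist_eq] using hx
    linarith [abs_nonneg C]

theorem slope_add_slope_neg_of_odd {f : ℝ → ℝ} (hf : ∀ x, f (-x) = -f x) {u x : ℝ}
    (hx : x ≠ u) (hx' : x ≠ -u) :
    slope f u x + slope f u (-x) = 2 * ((x * f x - u * f u) / (x ^ 2 - u ^ 2)) := by
  have h1 : x - u ≠ 0 := sub_ne_zero.2 hx
  have h2 : x + u ≠ 0 := by rwa [← sub_neg_eq_add, sub_ne_zero]
  rw [slope_def_field, slope_def_field, hf, ← neg_div_neg_eq (-f x - f u),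
    show -(-x - u) = x + u by ring, sq_sub_sq]
  field_simp
  ring

theorem abs_log_sub_div_add_le {a u : ℝ} (hu : |u| < a) :
    |log ((a - u) / (a + u))| ≤ 2 * |u| / (a - |u|) := by
  have hupper : ∀ v : ℝ, |v| < a → log ((a - v) / (a + v)) ≤ 2 * |v| / (a - |v|) := by
    intro v hv
    have hv₁ := le_abs_self v
    have hv₂ := neg_abs_le v
    have hpos : 0 < a + v := by linarith
    calc log ((a - v) / (a + v))
      _ ≤ (a - v) / (a + v) - 1 := log_le_sub_one_of_pos (div_pos (by linarith) hpos)
      _ = 2 * -v / (a + v) := by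
        field_simp
        ring
      _ ≤ 2 * |v| / (a - |v|) := by
        gcongr <;> linarith
  refine abs_le'.2 ⟨hupper u hu, ?_⟩
  have h := hupper (-u) (by rwa [abs_neg])
  rwa [abs_neg, sub_neg_eq_add, ← sub_eq_add_neg, ← inv_div, log_inv] at h

/-! ### The folded kernel -/

/-- The kernel obtained by folding the difference quotient of `sgn(y) |y| ^ (β - 1)` at `1` along
`y ↦ -y`: its values at `y` and `-y` add up to `2 * foldedKernel β y`. At `y = 1` the definition
gives `0 / 0 = 0` instead of the limit `β / 2`, a null set for the integrals it is used in. -/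
noncomputable def foldedKernel (β y : ℝ) : ℝ := (y ^ β - 1) / (y ^ 2 - 1)

section FoldedKernel

variable {β y : ℝ}

theorem measurable_foldedKernel : Measurable (foldedKernel β) := by
  unfold foldedKernel
  fun_prop

theorem foldedKernel_nonneg (hβ : 0 ≤ β) (hy : 0 ≤ y) : 0 ≤ foldedKernel β y := by
  rcases le_total y 1 with hy1 | hy1
  · exact div_nonneg_of_nonpos (sub_nonpos.2 (rpow_le_one hy hy1 hβ))
      (sub_nonpos.2 (pow_le_one₀ hy hy1))
  · exact div_nonneg (sub_nonneg.2 (one_le_rpow hy1 hβ)) (sub_nonneg.2 (one_le_pow₀ hy1))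

theorem foldedKernel_le_one (hβ : β ≤ 2) (hy : y ∈ Ioo 0 1) : foldedKernel β y ≤ 1 := by
  have hsq : y ^ 2 < 1 := pow_lt_one₀ hy.1.le hy.2 two_ne_zero
  have hle : y ^ (2 : ℝ) ≤ y ^ β := rpow_le_rpow_of_exponent_ge hy.1 hy.2.le hβ
  rw [rpow_two] at hle
  rw [foldedKernel, div_le_one_of_neg (by linarith)]
  linarith

theorem foldedKernel_le_rpow (hβ : β ≤ 2) (hy : 1 < y) : foldedKernel β y ≤ y ^ (β - 2) := by
  have hsq : 1 < y ^ 2 := one_lt_pow₀ hy two_ne_zero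
  have hle : y ^ (β - 2) ≤ 1 := rpow_le_one_of_one_le_of_nonpos hy.le (by linarith)
  have hmul : y ^ β = y ^ (β - 2) * y ^ 2 := by
    rw [← rpow_two, ← rpow_add (by linarith), sub_add_cancel]
  rw [foldedKernel, div_le_iff₀ (by linarith), hmul]
  linarith

theorem integrableOn_foldedKernel_Ioo (h0 : 0 ≤ β) (h2 : β ≤ 2) :
    IntegrableOn (foldedKernel β) (Ioo 0 1) := by
  refine Measure.integrableOn_of_bounded (M := 1) (by simp)
    measurable_foldedKernel.aestronglyMeasurable ?_
  filter_upwards [ae_restrict_mem measurableSet_Ioo] with y hy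
  rw [norm_of_nonneg (foldedKernel_nonneg h0 hy.1.le)]
  exact foldedKernel_le_one h2 hy

theorem integrableOn_foldedKernel_Ioi_one (h0 : 0 ≤ β) (h1 : β < 1) :
    IntegrableOn (foldedKernel β) (Ioi 1) := by
  refine (integrableOn_Ioi_rpow_of_lt (a := β - 2) (by linarith) one_pos).mono'
    measurable_foldedKernel.aestronglyMeasurable ?_
  filter_upwards [ae_restrict_mem measurableSet_Ioi] with y (hy : 1 < y)
  rw [norm_of_nonneg (foldedKernel_nonneg h0 (by linarith))]
  exact foldedKernel_le_rpow (by linarith) hy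

theorem integrableOn_foldedKernel_Ioi_zero (h0 : 0 ≤ β) (h1 : β < 1) :
    IntegrableOn (foldedKernel β) (Ioi 0) := by
  rw [← Ioc_union_Ioi_eq_Ioi zero_le_one]
  exact ((integrableOn_Ioc_iff_integrableOn_Ioo (μ := volume)).2
    (integrableOn_foldedKernel_Ioo h0 (by linarith))).union
    (integrableOn_foldedKernel_Ioi_one h0 h1)

theorem integral_Ioo_zero_one_rpow {r : ℝ} (hr : -1 < r) :
    ∫ y in Ioo (0 : ℝ) 1, y ^ r = 1 / (r + 1) := by
  rw [← integral_Ioc_eq_integral_Ioo, ← intervalIntegral.integral_of_le zero_le_one,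
    integral_rpow (.inl hr), one_rpow, zero_rpow (by linarith), sub_zero]

theorem hasSum_integral_foldedKernel_Ioo (h0 : 0 ≤ β) (h2 : β ≤ 2) :
    HasSum (fun k : ℕ ↦ 1 / (2 * (k : ℝ) + 1) - 1 / (2 * k + 1 + β))
      (∫ y in Ioo 0 1, foldedKernel β y) := by
  have hterm (k : ℕ) : 1 / (2 * (k : ℝ) + 1) - 1 / (2 * k + 1 + β) =
      ∫ y in Ioo 0 1, foldedKernel β y * (1 - y ^ 2) * (y ^ 2) ^ k := by
    have : (0 : ℝ) ≤ k := k.cast_nonneg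
    have hint {r : ℝ} (hr : -1 < r) : IntegrableOn (fun y : ℝ ↦ y ^ r) (Ioo 0 1) :=
      (intervalIntegral.integrableOn_Ioo_rpow_iff one_pos).2 hr
    rw [add_right_comm, ← integral_Ioo_zero_one_rpow (by linarith : -1 < 2 * (k : ℝ)),
      ← integral_Ioo_zero_one_rpow (by linarith : -1 < 2 * (k : ℝ) + β),
      ← integral_sub (hint (by linarith)) (hint (by linarith))]
    refine setIntegral_congr_fun measurableSet_Ioo fun y hy ↦ ?_
    have hsq : y ^ 2 - 1 ≠ 0 := by
      linarith [pow_lt_one₀ hy.1.le hy.2 two_ne_zero]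
    have hpow : (y ^ 2) ^ k = y ^ (2 * (k : ℝ)) := by
      rw [← pow_mul, ← rpow_natCast]
      push_cast
      rfl
    simp only [foldedKernel, hpow, rpow_add hy.1]
    field_simp
    ring
  simp only [hterm]
  refine hasSum_integral_mul_one_sub_mul_pow (integrableOn_foldedKernel_Ioo h0 h2)
    (by fun_prop) ?_
  filter_upwards [ae_restrict_mem measurableSet_Ioo] with y hy
  exact ⟨sq_nonneg y, pow_lt_one₀ hy.1.le hy.2 two_ne_zero⟩

theorem hasSum_integral_foldedKernel_Ioi (h0 : 0 ≤ β) (h1 : β < 1) :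
    HasSum (fun k : ℕ ↦ 1 / (2 * (k : ℝ) + 1 - β) - 1 / (2 * k + 1))
      (∫ y in Ioi 1, foldedKernel β y) := by
  have hterm (k : ℕ) : 1 / (2 * (k : ℝ) + 1 - β) - 1 / (2 * k + 1) =
      ∫ y in Ioi 1, foldedKernel β y * (1 - (y ^ 2)⁻¹) * (y ^ 2)⁻¹ ^ k := by
    have : (0 : ℝ) ≤ k := k.cast_nonneg
    have hint {r : ℝ} (hr : r < -1) : IntegrableOn (fun y : ℝ ↦ y ^ r) (Ioi 1) :=
      integrableOn_Ioi_rpow_of_lt hr one_pos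
    have hval {s : ℝ} (hs : 0 < s) : 1 / s = ∫ y in Ioi (1 : ℝ), y ^ (-s - 1) := by
      rw [integral_Ioi_rpow_of_lt (by linarith) one_pos, one_rpow, sub_add_cancel, neg_div_neg_eq]
    rw [hval (by linarith), hval (by linarith),
      ← integral_sub (hint (by linarith)) (hint (by linarith))]
    refine setIntegral_congr_fun measurableSet_Ioi fun y (hy : 1 < y) ↦ ?_
    have hy0 : 0 < y := by linarith
    have hsq : y ^ 2 - 1 ≠ 0 := by linarith [one_lt_pow₀ hy two_ne_zero]
    have hpow : y ^ (-(2 * (k : ℝ) + 1) - 1) = (y ^ 2)⁻¹ ^ (k + 1) := by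
      rw [inv_pow, ← pow_mul, ← rpow_natCast, ← rpow_neg hy0.le]
      push_cast
      ring_nf
    have hpow' : y ^ (-(2 * (k : ℝ) + 1 - β) - 1) = y ^ β * (y ^ 2)⁻¹ ^ (k + 1) := by
      rw [← hpow, ← rpow_add hy0]
      ring_nf
    simp only [foldedKernel, hpow, hpow', pow_succ]
    field_simp
  simp only [hterm]
  refine hasSum_integral_mul_one_sub_mul_pow (integrableOn_foldedKernel_Ioi_one h0 h1)
    (by fun_prop) ?_
  filter_upwards [ae_restrict_mem measurableSet_Ioi] with y (hy : 1 < y)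
  exact ⟨by positivity, inv_lt_one_of_one_lt₀ (one_lt_pow₀ hy two_ne_zero)⟩

theorem integral_foldedKernel_Ioi_zero (h0 : 0 ≤ β) (h1 : β < 1) :
    ∫ y in Ioi 0, foldedKernel β y = π / 2 * tan (π * β / 2) := by
  have hsplit : ∫ y in Ioi 0, foldedKernel β y =
      (∫ y in Ioo 0 1, foldedKernel β y) + ∫ y in Ioi 1, foldedKernel β y := by
    rw [← intervalIntegral.integral_interval_add_Ioi (integrableOn_foldedKernel_Ioi_zero h0 h1)
      (integrableOn_foldedKernel_Ioi_one h0 h1), intervalIntegral.integral_of_le zero_le_one,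
      integral_Ioc_eq_integral_Ioo]
  rw [hsplit]
  refine HasSum.unique ?_ (hasSum_tan ⟨by linarith, h1⟩)
  refine ((hasSum_integral_foldedKernel_Ioo h0 (by linarith)).add
    (hasSum_integral_foldedKernel_Ioi h0 h1)).congr_fun fun k ↦ ?_
  ring

theorem abs_integral_foldedKernel_sub_le (h0 : 0 ≤ β) (h1 : β < 1) {M : ℝ} (hM : 1 ≤ M) :
    |(∫ y in (0 : ℝ)..M, foldedKernel β y) - π / 2 * tan (π * β / 2)| ≤ M ^ (β - 1) / (1 - β) := by
  have hM0 : 0 < M := by linarith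
  have hint := integrableOn_foldedKernel_Ioi_zero h0 h1
  have htail : IntegrableOn (foldedKernel β) (Ioi M) := hint.mono_set (Ioi_subset_Ioi hM0.le)
  rw [← integral_foldedKernel_Ioi_zero h0 h1,
    ← intervalIntegral.integral_Ioi_sub_Ioi hint hM0.le, sub_sub_cancel_left, abs_neg, abs_of_nonneg
    (setIntegral_nonneg measurableSet_Ioi fun y hy ↦ foldedKernel_nonneg h0 (hM0.trans hy).le)]
  calc ∫ y in Ioi M, foldedKernel β y
    _ ≤ ∫ y in Ioi M, y ^ (β - 2) :=
      setIntegral_mono_on htail (integrableOn_Ioi_rpow_of_lt (by linarith) hM0) measurableSet_Ioi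
        fun y hy ↦ foldedKernel_le_rpow (by linarith) (hM.trans_lt hy)
    _ = M ^ (β - 1) / (1 - β) := by
      rw [integral_Ioi_rpow_of_lt (by linarith) hM0, ← neg_div_neg_eq]
      ring_nf

end FoldedKernel

/-! ### Difference quotients of odd powers -/

/-- The odd power `sgn(x) |x| ^ r`, in terms of which the derivative of `|x| ^ r` away from `0` is
`r * oddRpow (r - 1) x`. -/
noncomputable def oddRpow (r x : ℝ) : ℝ := x * |x| ^ (r - 1)

section OddRpow

variable {r x : ℝ}

theorem oddRpow_neg (r x : ℝ) : oddRpow r (-x) = -oddRpow r x := by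
  rw [oddRpow, oddRpow, abs_neg, neg_mul]

theorem mul_oddRpow (r : ℝ) (hx : x ≠ 0) : x * oddRpow r x = |x| ^ (r + 1) := by
  have hx' : 0 < |x| := abs_pos.2 hx
  rw [oddRpow, ← mul_assoc, ← sq, ← sq_abs, ← rpow_two, ← rpow_add hx']
  ring_nf

theorem abs_oddRpow (r : ℝ) (hx : x ≠ 0) : |oddRpow r x| = |x| ^ r := by
  rw [oddRpow, abs_mul, abs_rpow_of_nonneg (abs_nonneg x), abs_abs, rpow_sub_one (abs_ne_zero.2 hx),
    mul_div_cancel₀ _ (abs_ne_zero.2 hx)]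

theorem differentiableAt_oddRpow (r : ℝ) (hx : x ≠ 0) : DifferentiableAt ℝ (oddRpow r) x :=
  differentiableAt_id.mul
    ((differentiableAt_abs hx).rpow_const (.inl (abs_ne_zero.2 hx)))

theorem intervalIntegrable_oddRpow (hr : -1 < r) (a b : ℝ) :
    IntervalIntegrable (oddRpow r) volume a b := by
  refine intervalIntegrable_of_odd (fun x ↦ (oddRpow_neg r x).symm) (fun x hx ↦ ?_)
  refine (intervalIntegral.intervalIntegrable_rpow' hr).congr fun y hy ↦ ?_
  rw [uIoc_of_le hx.le] at hy
  rw [oddRpow, abs_of_pos hy.1, rpow_sub_one hy.1.ne', mul_div_cancel₀ _ hy.1.ne']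

theorem integrableOn_oddRpow_Ioo (hr : -1 < r) {a : ℝ} (ha : 0 ≤ a) :
    IntegrableOn (oddRpow r) (Ioo (-a) a) :=
  (intervalIntegrable_iff_integrableOn_Ioo_of_le (by linarith)).1
    (intervalIntegrable_oddRpow hr (-a) a)

theorem integral_oddRpow_neg_self (r a : ℝ) : ∫ x in -a..a, oddRpow r x = 0 := by
  have h := intervalIntegral.integral_comp_neg (oddRpow r) (a := -a) (b := a)
  simp only [oddRpow_neg, intervalIntegral.integral_neg, neg_neg] at h
  linarith

theorem hasDerivAt_abs_rpow_of_ne_zero (r : ℝ) (hx : x ≠ 0) :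
    HasDerivAt (fun x ↦ |x| ^ r) (r * oddRpow (r - 1) x) x := by
  have h := (hasDerivAt_abs hx).rpow_const (p := r) (.inl (abs_ne_zero.2 hx))
  convert h using 1
  rw [oddRpow, rpow_sub_one (abs_ne_zero.2 hx) (r - 1)]
  have := sign_mul_abs x
  field_simp
  linear_combination -r * this

end OddRpow

theorem slope_oddRpow_add_slope_neg (β : ℝ) {u x : ℝ} (hu : u ≠ 0) (hx : 0 < x) (hxu : x ≠ |u|) :
    slope (oddRpow (β - 1)) u x + slope (oddRpow (β - 1)) u (-x) =
      2 * |u| ^ (β - 2) * foldedKernel β (x / |u|) := by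
  have hu' : 0 < |u| := abs_pos.2 hu
  rw [slope_add_slope_neg_of_odd (oddRpow_neg _), mul_oddRpow _ hx.ne', mul_oddRpow _ hu,
    sub_add_cancel, abs_of_pos hx, foldedKernel, div_rpow hx.le hu'.le, rpow_sub hu', rpow_two,
    ← sq_abs u]
  · have : x ^ 2 - |u| ^ 2 ≠ 0 := by
      rw [sq_sub_sq]
      exact mul_ne_zero (by positivity) (sub_ne_zero.2 hxu)
    field_simp
  · rintro rfl
    exact hxu (abs_of_pos hx).symm
  · rintro rfl
    exact hxu (by rw [← abs_neg, abs_of_pos hx])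

theorem integral_slope_oddRpow {β : ℝ} (hβ : 0 < β) {a u : ℝ} (ha : 0 ≤ a) (hu : u ≠ 0) :
    ∫ x in -a..a, slope (oddRpow (β - 1)) u x =
      2 * |u| ^ (β - 1) * ∫ y in (0 : ℝ)..(a / |u|), foldedKernel β y := by
  have hu' : 0 < |u| := abs_pos.2 hu
  have hint : IntervalIntegrable (slope (oddRpow (β - 1)) u) volume (-a) a := by
    rw [intervalIntegrable_iff]
    exact integrableOn_slope
      (intervalIntegrable_iff.1 (intervalIntegrable_oddRpow (by linarith) _ _)) (by simp [uIoc])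
      (differentiableAt_oddRpow _ hu)
  calc ∫ x in -a..a, slope (oddRpow (β - 1)) u x
    _ = ∫ x in (0 : ℝ)..a, 2 * |u| ^ (β - 2) * foldedKernel β (x / |u|) := by
      rw [integral_neg_self_eq_integral_add_comp_neg hint]
      refine intervalIntegral.integral_congr_ae ?_
      filter_upwards [Measure.ae_ne volume |u|] with x hxu hx
      rw [uIoc_of_le ha] at hx
      exact slope_oddRpow_add_slope_neg β hu hx.1 hxu
    _ = 2 * |u| ^ (β - 1) * ∫ y in (0 : ℝ)..(a / |u|), foldedKernel β y := by
      rw [intervalIntegral.integral_const_mul, intervalIntegral.integral_comp_div _ hu'.ne',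
        zero_div, smul_eq_mul, ← mul_assoc, mul_assoc 2, ← rpow_add_one hu'.ne']
      ring_nf

theorem abs_integral_slope_oddRpow_sub_le {β : ℝ} (hβ : β ∈ Ioo (0 : ℝ) 1) {a u : ℝ} (hu : u ≠ 0)
    (hua : |u| ≤ a) :
    |(∫ x in -a..a, slope (oddRpow (β - 1)) u x) - π * tan (π * β / 2) * |u| ^ (β - 1)| ≤
      2 * a ^ (β - 1) / (1 - β) := by
  have hu' : 0 < |u| := abs_pos.2 hu
  have hM := abs_integral_foldedKernel_sub_le hβ.1.le hβ.2 ((one_le_div hu').2 hua)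
  rw [integral_slope_oddRpow hβ.1 (hu'.le.trans hua) hu]
  calc |2 * |u| ^ (β - 1) * (∫ y in (0 : ℝ)..(a / |u|), foldedKernel β y) -
        π * tan (π * β / 2) * |u| ^ (β - 1)|
    _ = 2 * |u| ^ (β - 1) *
        |(∫ y in (0 : ℝ)..(a / |u|), foldedKernel β y) - π / 2 * tan (π * β / 2)| := by
      rw [← abs_of_pos (by positivity : 0 < 2 * |u| ^ (β - 1)), ← abs_mul,
        abs_of_pos (by positivity : 0 < 2 * |u| ^ (β - 1))]
      ring_nf
    _ ≤ 2 * |u| ^ (β - 1) * ((a / |u|) ^ (β - 1) / (1 - β)) := by gcongr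
    _ = 2 * a ^ (β - 1) / (1 - β) := by
      rw [div_rpow (hu'.le.trans hua) hu'.le]
      field_simp

/-! ### Principal values and the periodic Hilbert transform -/

/-- The interval `(-π, π)` with the window `[u - ε, u + ε]` removed. -/
def excisedIoo (u ε : ℝ) : Set ℝ := {x | x ∈ Ioo (-π) π ∧ ε < |x - u|}

/-- The principal value at `u` of the integral of `g` over `(-π, π)` exists and equals `v`. Unlike
`pvInt`, which takes a junk value where the limit does not exist, this records convergence. -/
def HasPVInt (g : ℝ → ℝ) (u v : ℝ) : Prop :=
  Tendsto (fun ε ↦ ∫ x in excisedIoo u ε, g x) (𝓝[>] 0) (𝓝 v)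

section PrincipalValue

variable {f g : ℝ → ℝ} {u v w : ℝ}

theorem measurableSet_excisedIoo (u ε : ℝ) : MeasurableSet (excisedIoo u ε) :=
  measurableSet_Ioo.inter
    (measurableSet_lt (g := fun x ↦ |x - u|) measurable_const (by fun_prop))

theorem excisedIoo_subset (u ε : ℝ) : excisedIoo u ε ⊆ Ioo (-π) π := fun _ hx ↦ hx.1

theorem excisedIoo_eq_union {ε : ℝ} (hε : ε ∈ Ioo 0 (π - |u|)) :
    excisedIoo u ε = Ioo (-π) (u - ε) ∪ Ioo (u + ε) π := by
  obtain ⟨h0, h1⟩ := hε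
  have hu := le_abs_self u
  have hu' := neg_abs_le u
  ext x
  simp only [excisedIoo, mem_ofPred_eq, mem_union, mem_Ioo, lt_abs]
  grind

theorem integrableOn_inv_sub_excisedIoo {ε : ℝ} (hε : 0 < ε) :
    IntegrableOn (fun x ↦ (x - u)⁻¹) (excisedIoo u ε) := by
  refine Measure.integrableOn_of_bounded (M := ε⁻¹)
    ((measure_mono (excisedIoo_subset u ε)).trans_lt measure_Ioo_lt_top).ne (by fun_prop) ?_
  filter_upwards [ae_restrict_mem (measurableSet_excisedIoo u ε)] with x hx
  rw [norm_inv, norm_eq_abs]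
  exact inv_anti₀ hε hx.2.le

theorem integral_inv_sub_excisedIoo {ε : ℝ} (hε : ε ∈ Ioo 0 (π - |u|)) :
    ∫ x in excisedIoo u ε, (x - u)⁻¹ = log ((π - u) / (π + u)) := by
  have hint := integrableOn_inv_sub_excisedIoo (u := u) hε.1
  rw [excisedIoo_eq_union hε] at hint ⊢
  obtain ⟨h0, h1⟩ := hε
  have hu := le_abs_self u
  have hu' := neg_abs_le u
  have hdisj : Disjoint (Ioo (-π) (u - ε)) (Ioo (u + ε) π) := by
    rw [Set.disjoint_left]
    rintro x ⟨-, hx⟩ ⟨hx', -⟩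
    linarith
  have hleft : ∫ x in Ioo (-π) (u - ε), (x - u)⁻¹ = log (ε / (π + u)) := by
    rw [← integral_Ioc_eq_integral_Ioo, ← intervalIntegral.integral_of_le (by linarith),
      intervalIntegral.integral_comp_sub_right (·⁻¹),
      integral_inv_of_neg (by linarith) (by linarith), ← neg_div_neg_eq]
    ring_nf
  have hright : ∫ x in Ioo (u + ε) π, (x - u)⁻¹ = log ((π - u) / ε) := by
    rw [← integral_Ioc_eq_integral_Ioo, ← intervalIntegral.integral_of_le (by linarith),
      intervalIntegral.integral_comp_sub_right (·⁻¹),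
      integral_inv_of_pos (by linarith) (by linarith), add_sub_cancel_left]
  have hpos : 0 < π + u := by linarith
  rw [setIntegral_union hdisj measurableSet_Ioo hint.left_of_union hint.right_of_union, hleft,
    hright, ← log_mul (by positivity) (div_ne_zero (by linarith) h0.ne'), mul_comm,
    div_mul_div_cancel₀ h0.ne']

theorem HasPVInt.pvInt_eq (h : HasPVInt g u v) : pvInt g u = v := h.limUnder_eq

theorem HasPVInt.const_mul (c : ℝ) (h : HasPVInt g u v) :
    HasPVInt (fun x ↦ c * g x) u (c * v) := by
  simpa only [HasPVInt, integral_const_mul] using Tendsto.const_mul c h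

theorem HasPVInt.add (hf : HasPVInt f u v) (hg : HasPVInt g u w)
    (hfi : ∀ ε > 0, IntegrableOn f (excisedIoo u ε))
    (hgi : ∀ ε > 0, IntegrableOn g (excisedIoo u ε)) :
    HasPVInt (fun x ↦ f x + g x) u (v + w) := by
  refine (Tendsto.add hf hg).congr' ?_
  filter_upwards [self_mem_nhdsWithin] with ε hε
  exact (integral_add (hfi ε hε) (hgi ε hε)).symm

theorem hasPVInt_of_integrableOn (hg : IntegrableOn g (Ioo (-π) π)) (u : ℝ) :
    HasPVInt g u (∫ x in Ioo (-π) π, g x) := by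
  have hcover : AECover (volume.restrict (Ioo (-π) π)) (𝓝[>] (0 : ℝ))
      fun ε ↦ {x | ε < |x - u|} := by
    refine ⟨?_, fun ε ↦ measurableSet_lt measurable_const (by fun_prop)⟩
    filter_upwards [Measure.ae_ne _ u] with x hx
    exact nhdsWithin_le_nhds (Iio_mem_nhds (abs_pos.2 (sub_ne_zero.2 hx)))
  refine (hcover.integral_tendsto_of_countably_generated hg).congr fun ε ↦ ?_
  rw [Measure.restrict_restrict (hcover.measurableSet ε), inter_comm]
  rfl

theorem hasPVInt_inv_sub (hu : |u| < π) :
    HasPVInt (fun x ↦ (x - u)⁻¹) u (log ((π - u) / (π + u))) := by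
  refine tendsto_const_nhds.congr' ?_
  filter_upwards [Ioo_mem_nhdsGT (sub_pos.2 hu)] with ε hε
  exact (integral_inv_sub_excisedIoo hε).symm

theorem hasPVInt_div_sub (hf : IntegrableOn f (Ioo (-π) π)) (hu : |u| < π)
    (hd : DifferentiableAt ℝ f u) :
    HasPVInt (fun x ↦ f x / (x - u)) u
      ((∫ x in -π..π, slope f u x) + f u * log ((π - u) / (π + u))) := by
  have hslope := integrableOn_slope hf measure_Ioo_lt_top.ne hd
  rw [intervalIntegral.integral_of_le (by linarith [pi_pos]), integral_Ioc_eq_integral_Ioo]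
  convert (hasPVInt_of_integrableOn hslope u).add ((hasPVInt_inv_sub hu).const_mul (f u))
    (fun ε _ ↦ hslope.mono_set (excisedIoo_subset u ε))
    (fun ε hε ↦ (integrableOn_inv_sub_excisedIoo hε).const_mul (f u)) using 2 with x
  rw [slope_def_field]
  ring

theorem pvInt_congr_ae (h : f =ᵐ[volume.restrict (Ioo (-π) π)] g) (u : ℝ) :
    pvInt f u = pvInt g u := by
  unfold pvInt
  congr 1
  ext ε
  exact integral_congr_ae (ae_restrict_of_ae_restrict_of_subset (excisedIoo_subset u ε) h)

theorem periodicHilbert_congr_ae (h : f =ᵐ[volume.restrict (Ioo (-π) π)] g) (u : ℝ) :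
    periodicHilbert f u = periodicHilbert g u := by
  unfold periodicHilbert
  congr 2
  ext n
  refine pvInt_congr_ae ?_ u
  filter_upwards [h] with x hx
  rw [hx]

end PrincipalValue

section NonzeroModes

variable {f : ℝ → ℝ} {u : ℝ} {n : ℤ}

theorem mul_abs_le_abs_sub_add (hu : |u| < π) (hn : n ≠ 0) {x : ℝ} (hx : |x| ≤ π) :
    (π - |u|) * |(n : ℝ)| ≤ |x - u + 2 * π * n| := by
  have hn1 : (1 : ℝ) ≤ |(n : ℝ)| := mod_cast Int.one_le_abs hn
  have hmul : |2 * π * n| = 2 * π * |(n : ℝ)| := by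
    rw [abs_mul, abs_of_pos two_pi_pos]
  calc (π - |u|) * |(n : ℝ)|
    _ ≤ 2 * π * |(n : ℝ)| - (|x| + |u|) := by nlinarith [abs_nonneg u]
    _ ≤ |2 * π * n| - |x - u| := by
      rw [hmul]
      gcongr
      exact abs_sub _ _
    _ ≤ |x - u + 2 * π * n| := by
      rw [add_comm, ← sub_neg_eq_add, ← abs_neg (x - u)]
      exact abs_sub_abs_le_abs_sub _ _

theorem abs_inv_sub_add_sub_inv_le (hu : |u| < π) (hn : n ≠ 0) {x : ℝ} (hx : |x| ≤ π) :
    |(x - u + 2 * π * n)⁻¹ - (2 * π * n)⁻¹| ≤ 1 / (π - |u|) * (1 / (n : ℝ) ^ 2) := by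
  have : (0 : ℝ) < |(n : ℝ)| := by positivity
  have hu0 : 0 < π - |u| := sub_pos.2 hu
  have hden := mul_abs_le_abs_sub_add hu hn hx
  have hmode : |2 * π * n| = 2 * π * |(n : ℝ)| := by rw [abs_mul, abs_of_pos two_pi_pos]
  have hshift : |x - u| ≤ 2 * π := (abs_sub _ _).trans (by linarith)
  rw [inv_sub_inv (abs_pos.1 (lt_of_lt_of_le (by positivity) hden)) (by positivity), abs_div,
    abs_mul, sub_add_cancel_right, abs_neg, hmode]
  calc |x - u| / (|x - u + 2 * π * n| * (2 * π * |(n : ℝ)|))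
    _ ≤ 2 * π / ((π - |u|) * |(n : ℝ)| * (2 * π * |(n : ℝ)|)) := by gcongr
    _ = 1 / (π - |u|) * (1 / (n : ℝ) ^ 2) := by
      rw [← sq_abs (n : ℝ)]
      field_simp

theorem abs_pvInt_div_sub_add_le (hf : IntegrableOn f (Ioo (-π) π))
    (hf0 : ∫ x in Ioo (-π) π, f x = 0) (hu : |u| < π) (hn : n ≠ 0) :
    |pvInt (fun x ↦ f x / (x - u + 2 * π * n)) u| ≤
      (∫ x in Ioo (-π) π, |f x|) / (π - |u|) * (1 / (n : ℝ) ^ 2) := by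
  set k : ℝ → ℝ := fun x ↦ (x - u + 2 * π * n)⁻¹ - (2 * π * n)⁻¹ with hk
  set B : ℝ := 1 / (π - |u|) * (1 / (n : ℝ) ^ 2) with hB
  have hkB : ∀ᵐ x ∂volume.restrict (Ioo (-π) π), ‖k x‖ ≤ B := by
    filter_upwards [ae_restrict_mem measurableSet_Ioo] with x hx
    exact abs_inv_sub_add_sub_inv_le hu hn (abs_lt.2 hx).le
  have hfk : IntegrableOn (fun x ↦ f x * k x) (Ioo (-π) π) := hf.mul_bdd (by fun_prop) hkB
  have hsplit : (fun x ↦ f x / (x - u + 2 * π * n)) =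
      fun x ↦ f x * k x + f x * (2 * π * n)⁻¹ := by
    ext x
    simp only [hk]
    ring
  have hpv : pvInt (fun x ↦ f x / (x - u + 2 * π * n)) u = ∫ x in Ioo (-π) π, f x * k x := by
    rw [hsplit]
    refine (hasPVInt_of_integrableOn (hfk.add (hf.mul_const _)) u).pvInt_eq.trans ?_
    simp only [Pi.add_apply]
    rw [integral_add hfk (hf.mul_const _), integral_mul_const, hf0, zero_mul, add_zero]
  rw [hpv]
  calc |∫ x in Ioo (-π) π, f x * k x|
    _ ≤ ∫ x in Ioo (-π) π, |f x| * B := by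
      rw [← norm_eq_abs]
      refine norm_integral_le_of_norm_le (hf.abs.mul_const B) (hkB.mono fun x hx ↦ ?_)
      rw [norm_mul, norm_eq_abs (f x)]
      gcongr
    _ = (∫ x in Ioo (-π) π, |f x|) / (π - |u|) * (1 / (n : ℝ) ^ 2) := by
      rw [integral_mul_const, hB]
      ring

-- The `n = 0` term of the series in the bound is `1 / 0 = 0`.
theorem abs_periodicHilbert_sub_le {v : ℝ} (hf : IntegrableOn f (Ioo (-π) π))
    (hf0 : ∫ x in Ioo (-π) π, f x = 0) (hu : |u| < π)
    (hv : HasPVInt (fun x ↦ f x / (x - u)) u v) :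
    |periodicHilbert f u - 1 / π * v| ≤
      1 / π * ((∫ x in Ioo (-π) π, |f x|) / (π - |u|) * ∑' n : ℤ, 1 / (n : ℝ) ^ 2) := by
  set a : ℤ → ℝ := fun n ↦ pvInt (fun x ↦ f x / (x - u + 2 * π * n)) u with ha
  set B : ℝ := (∫ x in Ioo (-π) π, |f x|) / (π - |u|)
  have : 0 ≤ B := div_nonneg (integral_nonneg fun x ↦ abs_nonneg _) (sub_nonneg.2 hu.le)
  have hbound : ∀ n ≠ 0, ‖a n‖ ≤ B * (1 / (n : ℝ) ^ 2) := fun n hn ↦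
    abs_pvInt_div_sub_add_le hf hf0 hu hn
  have hsum : Summable fun n : ℤ ↦ B * (1 / (n : ℝ) ^ 2) :=
    (summable_one_div_int_pow.2 one_lt_two).mul_left B
  have hsuma : Summable a :=
    Summable.of_norm_bounded_eventually hsum ((eventually_cofinite_ne 0).mono hbound)
  have ha0 : a 0 = v := by
    simpa [ha] using hv.pvInt_eq
  rw [periodicHilbert, ← mul_sub, abs_mul, abs_of_pos (by positivity), ← tsum_mul_left,
    hsuma.tsum_eq_add_tsum_ite 0, ha0, add_sub_cancel_left]
  gcongr
  rw [← norm_eq_abs]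
  refine tsum_of_norm_bounded hsum.hasSum fun n ↦ ?_
  split_ifs with hn
  · rw [norm_zero]
    positivity
  · exact hbound n hn

end NonzeroModes

/-! ### The operator on powers of the absolute value -/

theorem perExt_of_mem_Ico (g : ℝ → ℝ) {x : ℝ} (hx : x ∈ Ico (-π) π) : perExt g x = g x := by
  have hfloor : ⌊(x + π) / (2 * π)⌋ = 0 := by
    rw [Int.floor_eq_zero_iff, mem_Ico, div_lt_one two_pi_pos]
    exact ⟨div_nonneg (by linarith [hx.1]) two_pi_pos.le, by linarith [hx.2]⟩
  rw [perExt, hfloor, Int.cast_zero, mul_zero, sub_zero]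

theorem deriv_perExt_of_mem_Ioo (g : ℝ → ℝ) {x : ℝ} (hx : x ∈ Ioo (-π) π) :
    deriv (perExt g) x = deriv g x := by
  refine EventuallyEq.deriv_eq ?_
  filter_upwards [Ioo_mem_nhds hx.1 hx.2] with y hy
  exact perExt_of_mem_Ico g (Ioo_subset_Ico_self hy)

theorem Kinf_perExt_abs_rpow (r u : ℝ) :
    Kinf (perExt fun x ↦ |x| ^ r) u = -periodicHilbert (fun x ↦ r * oddRpow (r - 1) x) u := by
  rw [Kinf, periodicHilbert_congr_ae]
  filter_upwards [ae_restrict_mem measurableSet_Ioo, Measure.ae_ne _ 0] with x hx hx0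
  rw [deriv_perExt_of_mem_Ioo _ hx, (hasDerivAt_abs_rpow_of_ne_zero r hx0).deriv]

theorem abs_oddRpow_mul_log_le_one {β u : ℝ} (hβ : 0 ≤ β) (hu : u ≠ 0) (hu1 : |u| ≤ 1) :
    |oddRpow (β - 1) u * log ((π - u) / (π + u))| ≤ 1 := by
  have hπ : 2 ≤ π - |u| := by linarith [pi_gt_three]
  have hu0 : 0 < |u| := abs_pos.2 hu
  rw [abs_mul, abs_oddRpow _ hu]
  calc |u| ^ (β - 1) * |log ((π - u) / (π + u))|
    _ ≤ |u| ^ (β - 1) * (2 * |u| / 2) := by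
      gcongr
      exact (abs_log_sub_div_add_le (by linarith)).trans (by gcongr)
    _ = |u| ^ β := by
      rw [mul_div_cancel_left₀ _ two_ne_zero, ← rpow_add_one hu0.ne', sub_add_cancel]
    _ ≤ 1 := rpow_le_one hu0.le hu1 hβ

theorem exists_hasPVInt_oddRpow_div_sub {β u : ℝ} (hβ : β ∈ Ioo (0 : ℝ) 1) (hu : u ≠ 0)
    (hu1 : |u| ≤ 1) :
    ∃ v, HasPVInt (fun x ↦ oddRpow (β - 1) x / (x - u)) u v ∧
      |v - π * tan (π * β / 2) * |u| ^ (β - 1)| ≤ 2 * π ^ (β - 1) / (1 - β) + 1 := by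
  have huπ : |u| < π := by linarith [pi_gt_three]
  refine ⟨_, hasPVInt_div_sub (integrableOn_oddRpow_Ioo (by linarith [hβ.1]) pi_nonneg) huπ
    (differentiableAt_oddRpow _ hu), ?_⟩
  rw [add_sub_right_comm]
  exact (abs_add_le _ _).trans (add_le_add (abs_integral_slope_oddRpow_sub_le hβ hu huπ.le)
    (abs_oddRpow_mul_log_le_one hβ.1.le hu hu1))

theorem exists_abs_periodicHilbert_const_mul_oddRpow_sub_le (c : ℝ) {β : ℝ}
    (hβ : β ∈ Ioo (0 : ℝ) 1) :
    ∃ C, ∀ u ≠ 0, |u| ≤ 1 → |periodicHilbert (fun x ↦ c * oddRpow (β - 1) x) u -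
      c * tan (π * β / 2) * |u| ^ (β - 1)| ≤ C := by
  have hπ : 1 < π := by linarith [pi_gt_three]
  set f : ℝ → ℝ := fun x ↦ c * oddRpow (β - 1) x with hf
  have hf_int : IntegrableOn f (Ioo (-π) π) :=
    (integrableOn_oddRpow_Ioo (by linarith [hβ.1]) pi_nonneg).const_mul c
  have hf_zero : ∫ x in Ioo (-π) π, f x = 0 := by
    rw [hf, integral_const_mul, ← integral_Ioc_eq_integral_Ioo,
      ← intervalIntegral.integral_of_le (by linarith), integral_oddRpow_neg_self, mul_zero]
  refine ⟨1 / π * ((∫ x in Ioo (-π) π, |f x|) / (π - 1) * ∑' n : ℤ, 1 / (n : ℝ) ^ 2) +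
    1 / π * (|c| * (2 * π ^ (β - 1) / (1 - β) + 1)), fun u hu hu1 ↦ ?_⟩
  obtain ⟨v, hv, hv_le⟩ := exists_hasPVInt_oddRpow_div_sub hβ hu hu1
  have hpv : HasPVInt (fun x ↦ f x / (x - u)) u (c * v) := by
    simpa only [hf, mul_div_assoc] using hv.const_mul c
  have hmain : |1 / π * (c * v) - c * tan (π * β / 2) * |u| ^ (β - 1)| =
      1 / π * (|c| * |v - π * tan (π * β / 2) * |u| ^ (β - 1)|) := by
    rw [← abs_mul c, ← abs_of_pos (one_div_pos.2 pi_pos), ← abs_mul,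
      abs_of_pos (one_div_pos.2 pi_pos)]
    congr 1
    field_simp
  refine (abs_sub_le _ (1 / π * (c * v)) _).trans (add_le_add ?_ ?_)
  · refine (abs_periodicHilbert_sub_le hf_int hf_zero (by linarith) hpv).trans ?_
    gcongr
  · rw [hmain]
    gcongr

/-- For `β ∈ (0,1)`, `K_∞ |u|^β = -β tan(πβ/2) |u|^(β-1) + O(1)` as `u → 0`. -/
theorem Kinf_abs_rpow (β : ℝ) (hβ : β ∈ Set.Ioo (0:ℝ) 1) :
    ∃ C : ℝ, 0 < C ∧ ∃ δ ∈ Set.Ioo (0:ℝ) π, ∀ u : ℝ, 0 < |u| → |u| < δ →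
      |Kinf (perExt (fun x => |x| ^ β)) u + β * Real.tan (π * β / 2) * |u| ^ (β - 1)| ≤ C := by
  obtain ⟨C, hC⟩ := exists_abs_periodicHilbert_const_mul_oddRpow_sub_le β hβ
  refine ⟨max C 1, by positivity, 1, ⟨one_pos, by linarith [pi_gt_three]⟩, fun u hu hu1 ↦ ?_⟩
  rw [Kinf_perExt_abs_rpow, neg_add_eq_sub, abs_sub_comm]
  exact (hC u (abs_pos.1 hu) hu1.le).trans (le_max_left C 1)
end
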